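/- Let T be the star on eight vertices (one center joined to seven leaves). Let F_△ be the triangle, F_CC the graph consisting of two disjoint copies of T plus an edge joining their centers, F_CL the graph consisting of two disjoint copies of T plus an edge joining the center of one copy to a leaf of the other, and F_LL the graph consisting of two disjoint copies of T plus an edge joining a leaf of one copy to a leaf of the other. Let F be the disjoint union F_△ ∪ F_CC ∪ F_CL ∪ F_LL. Then: (i) every graph T+e obtained by adding an edge between two non-adjacent vertices of T, and every graph 2T+e obtained from two disjoint copies of T by adding an edge with one endpoint in each copy, contains a connected component of F that is not contained in T; and (ii) if H is a disjoint union of complete graphs and (H,T) is an F-saturated blueprint, then |V(H)| is not congruent to 7 modulo 8. -/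

import Mathlib

open SimpleGraph Filter Topology

/-- `H` (on `β`) is contained in `G` (on `α`): `G` has a subgraph isomorphic to `H`. -/
def Contains {α β : Type*} (G : SimpleGraph α) (H : SimpleGraph β) : Prop :=
  ∃ f : β ↪ α, ∀ a b : β, H.Adj a b → G.Adj (f a) (f b)

/-- `G` is `F`-saturated: `G` does not contain `F`, but adding any missing edge creates `F`. -/
def SatSingle {γ α : Type*} (F : SimpleGraph γ) (G : SimpleGraph α) : Prop :=
  (¬ Contains G F) ∧
    ∀ u v : α, u ≠ v → ¬ G.Adj u v → Contains (G ⊔ SimpleGraph.fromEdgeSet {s(u, v)}) F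

/-- The disjoint union of two graphs. -/
def disjUnionG {α β : Type*} (G : SimpleGraph α) (H : SimpleGraph β) : SimpleGraph (α ⊕ β) :=
  SimpleGraph.fromRel (fun x y =>
    match x, y with
    | Sum.inl a, Sum.inl b => G.Adj a b
    | Sum.inr a, Sum.inr b => H.Adj a b
    | _, _ => False)

/-- `H ∪ kT`: the disjoint union of `H` with `k` copies of `T`. -/
def unionCopies {α β : Type*} (H : SimpleGraph α) (k : ℕ) (T : SimpleGraph β) :
    SimpleGraph (α ⊕ Fin k × β) :=
  SimpleGraph.fromRel (fun x y =>
    match x, y with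
    | Sum.inl a, Sum.inl b => H.Adj a b
    | Sum.inr (i, a), Sum.inr (j, b) => i = j ∧ T.Adj a b
    | _, _ => False)

/-- `T` is a tree such that every graph `T+e` (obtained by adding an edge between two
non-adjacent vertices of `T`) and every graph `2T+e` (obtained from the disjoint union of two
copies of `T` by adding an edge with one endpoint in each copy) contains a connected component of
`F` that is not contained in `T`. -/
def GoodTree {nF : ℕ} (F : SimpleGraph (Fin nF)) (t : ℕ) (T : SimpleGraph (Fin t)) : Prop :=
  T.IsTree ∧
  (∀ u v : Fin t, u ≠ v → ¬ T.Adj u v →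
    ∃ c : F.ConnectedComponent, ¬ Contains T (SimpleGraph.induce c.supp F) ∧
      Contains (T ⊔ SimpleGraph.fromEdgeSet {s(u, v)}) (SimpleGraph.induce c.supp F)) ∧
  (∀ u v : Fin t,
    ∃ c : F.ConnectedComponent, ¬ Contains T (SimpleGraph.induce c.supp F) ∧
      Contains (disjUnionG T T ⊔ SimpleGraph.fromEdgeSet {s(Sum.inl u, Sum.inr v)})
        (SimpleGraph.induce c.supp F))

/-- The star on eight vertices: centre `0` joined to seven leaves. -/
def starT : SimpleGraph (Fin 8) := SimpleGraph.fromRel (fun x _ => x = 0)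

/-- The triangle. -/
def Ftri : SimpleGraph (Fin 3) := ⊤

/-- Two disjoint copies of the star plus an edge joining their centres. -/
def FCC : SimpleGraph (Fin 8 ⊕ Fin 8) :=
  disjUnionG starT starT ⊔
    SimpleGraph.fromEdgeSet {s((Sum.inl 0 : Fin 8 ⊕ Fin 8), (Sum.inr 0 : Fin 8 ⊕ Fin 8))}

/-- Two disjoint copies of the star plus an edge joining the centre of one to a leaf of the
other. -/
def FCL : SimpleGraph (Fin 8 ⊕ Fin 8) :=
  disjUnionG starT starT ⊔
    SimpleGraph.fromEdgeSet {s((Sum.inl 0 : Fin 8 ⊕ Fin 8), (Sum.inr 1 : Fin 8 ⊕ Fin 8))}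

/-- Two disjoint copies of the star plus an edge joining a leaf of one to a leaf of the other. -/
def FLL : SimpleGraph (Fin 8 ⊕ Fin 8) :=
  disjUnionG starT starT ⊔
    SimpleGraph.fromEdgeSet {s((Sum.inl 1 : Fin 8 ⊕ Fin 8), (Sum.inr 1 : Fin 8 ⊕ Fin 8))}

/-- The graph `F = F_△ ∪ F_CC ∪ F_CL ∪ F_LL`. -/
def bigF : SimpleGraph ((Fin 3 ⊕ (Fin 8 ⊕ Fin 8)) ⊕ ((Fin 8 ⊕ Fin 8) ⊕ (Fin 8 ⊕ Fin 8))) :=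
  disjUnionG (disjUnionG Ftri FCC) (disjUnionG FCL FLL)

lemma starT_adj (a b : Fin 8) : starT.Adj a b ↔ a ≠ b ∧ (a = 0 ∨ b = 0) := by
  simp [starT]

section DisjUnion

variable {α β : Type*} (G : SimpleGraph α) (H : SimpleGraph β)

@[simp] lemma disjUnionG_adj_inl_inl (a b : α) :
    (disjUnionG G H).Adj (Sum.inl a) (Sum.inl b) ↔ G.Adj a b := by
  simp only [disjUnionG, SimpleGraph.fromRel_adj, ne_eq, Sum.inl.injEq]
  exact ⟨fun h => h.2.elim id fun h => h.symm, fun h => ⟨h.ne, Or.inl h⟩⟩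

@[simp] lemma disjUnionG_adj_inr_inr (a b : β) :
    (disjUnionG G H).Adj (Sum.inr a) (Sum.inr b) ↔ H.Adj a b := by
  simp only [disjUnionG, SimpleGraph.fromRel_adj, ne_eq, Sum.inr.injEq]
  exact ⟨fun h => h.2.elim id fun h => h.symm, fun h => ⟨h.ne, Or.inl h⟩⟩

@[simp] lemma disjUnionG_adj_inl_inr (a : α) (b : β) :
    ¬ (disjUnionG G H).Adj (Sum.inl a) (Sum.inr b) := by
  simp [disjUnionG]

@[simp] lemma disjUnionG_adj_inr_inl (a : α) (b : β) :
    ¬ (disjUnionG G H).Adj (Sum.inr b) (Sum.inl a) := by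
  simp [disjUnionG]

variable (k : ℕ)

@[simp] lemma unionCopies_adj_inl_inl (a b : α) :
    (unionCopies G k H).Adj (Sum.inl a) (Sum.inl b) ↔ G.Adj a b := by
  simp only [unionCopies, SimpleGraph.fromRel_adj, ne_eq, Sum.inl.injEq]
  exact ⟨fun h => h.2.elim id fun h => h.symm, fun h => ⟨h.ne, Or.inl h⟩⟩

@[simp] lemma unionCopies_adj_inr_inr (i j : Fin k) (a b : β) :
    (unionCopies G k H).Adj (Sum.inr (i, a)) (Sum.inr (j, b)) ↔ i = j ∧ H.Adj a b := by
  simp only [unionCopies, SimpleGraph.fromRel_adj, ne_eq, Sum.inr.injEq, Prod.mk.injEq]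
  refine ⟨fun h => h.2.elim id fun h => ⟨h.1.symm, h.2.symm⟩, fun h => ⟨fun h' => ?_, Or.inl h⟩⟩
  exact h.2.ne h'.2

@[simp] lemma unionCopies_adj_inl_inr (a : α) (p : Fin k × β) :
    ¬ (unionCopies G k H).Adj (Sum.inl a) (Sum.inr p) := by
  simp [unionCopies]

@[simp] lemma unionCopies_adj_inr_inl (a : α) (p : Fin k × β) :
    ¬ (unionCopies G k H).Adj (Sum.inr p) (Sum.inl a) := by
  simp [unionCopies]

end DisjUnion

/-- A property closed under adjacency spreads over the image of a preconnected graph. -/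
lemma closed_of_preconnected {α β : Type*} {X : SimpleGraph β} (hX : X.Preconnected)
    {G : SimpleGraph α} {f : β → α} (hf : ∀ a b, X.Adj a b → G.Adj (f a) (f b))
    {P : α → Prop} (hP : ∀ x y, G.Adj x y → P x → P y) {a : β} (ha : P (f a)) (b : β) :
    P (f b) := by
  obtain ⟨w⟩ := hX a b
  induction w with
  | nil => exact ha
  | cons h _ ih => exact ih (hP _ _ (hf _ _ h) ha)

/-- Two disjoint stars plus an edge joining vertex `u` of the first to vertex `v` of the second. -/
def doubleStar (u v : Fin 8) : SimpleGraph (Fin 8 ⊕ Fin 8) :=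
  disjUnionG starT starT ⊔
    SimpleGraph.fromEdgeSet {s((Sum.inl u : Fin 8 ⊕ Fin 8), (Sum.inr v : Fin 8 ⊕ Fin 8))}

lemma doubleStar_adj_inl_inl (u v a b : Fin 8) :
    (doubleStar u v).Adj (Sum.inl a) (Sum.inl b) ↔ starT.Adj a b := by
  simp [doubleStar]

lemma doubleStar_adj_inr_inr (u v a b : Fin 8) :
    (doubleStar u v).Adj (Sum.inr a) (Sum.inr b) ↔ starT.Adj a b := by
  simp [doubleStar]

lemma doubleStar_adj_inl_inr (u v a b : Fin 8) :
    (doubleStar u v).Adj (Sum.inl a) (Sum.inr b) ↔ a = u ∧ b = v := by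
  simp [doubleStar]

lemma doubleStar_adj_inr_inl (u v a b : Fin 8) :
    (doubleStar u v).Adj (Sum.inr b) (Sum.inl a) ↔ a = u ∧ b = v := by
  rw [SimpleGraph.adj_comm, doubleStar_adj_inl_inr]

lemma doubleStar_preconnected (u v : Fin 8) : (doubleStar u v).Preconnected := by
  have hl : ∀ a, (doubleStar u v).Reachable (Sum.inl a) (Sum.inl 0) := fun a => by
    by_cases h : a = 0
    · rw [h]
    · exact SimpleGraph.Adj.reachable (by simp [doubleStar_adj_inl_inl, starT_adj, h])
  have hr : ∀ a, (doubleStar u v).Reachable (Sum.inr a) (Sum.inr 0) := fun a => by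
    by_cases h : a = 0
    · rw [h]
    · exact SimpleGraph.Adj.reachable (by simp [doubleStar_adj_inr_inr, starT_adj, h])
  have hm : (doubleStar u v).Reachable (Sum.inl u) (Sum.inr v) :=
    SimpleGraph.Adj.reachable (by simp [doubleStar_adj_inl_inr])
  have hall : ∀ x, (doubleStar u v).Reachable x (Sum.inl 0) := by
    rintro (a | a)
    · exact hl a
    · exact (hr a).trans ((hr v).symm.trans (hm.symm.trans (hl u)))
  exact fun x y => (hall x).trans (hall y).symm

lemma starT_adj_swap {u : Fin 8} (hu : u ≠ 0) {a b : Fin 8} (h : starT.Adj a b) :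
    starT.Adj (Equiv.swap 1 u a) (Equiv.swap 1 u b) := by
  rw [starT_adj] at h ⊢
  have h0 : Equiv.swap 1 u 0 = 0 := Equiv.swap_apply_of_ne_of_ne (by decide) hu.symm
  refine ⟨fun h' => h.1 ((Equiv.swap 1 u).injective h'), h.2.imp ?_ ?_⟩ <;>
  · rintro rfl
    exact h0

/-- Automorphisms of the two stars carry one double star onto another. -/
lemma contains_doubleStar_of_equiv (σ τ : Fin 8 ≃ Fin 8)
    (hσ : ∀ a b, starT.Adj a b → starT.Adj (σ a) (σ b))
    (hτ : ∀ a b, starT.Adj a b → starT.Adj (τ a) (τ b)) (u v : Fin 8) :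
    Contains (doubleStar (σ u) (τ v)) (doubleStar u v) := by
  refine ⟨(Equiv.sumCongr σ τ).toEmbedding, ?_⟩
  rintro (a | a) (b | b) h
  · simpa [doubleStar_adj_inl_inl] using hσ a b (by simpa [doubleStar_adj_inl_inl] using h)
  · simpa [doubleStar_adj_inl_inr] using h
  · simpa [doubleStar_adj_inr_inl] using h
  · simpa [doubleStar_adj_inr_inr] using hτ a b (by simpa [doubleStar_adj_inr_inr] using h)

lemma contains_doubleStar_swap (u v : Fin 8) :
    Contains (doubleStar v u) (doubleStar u v) := by
  refine ⟨(Equiv.sumComm _ _).toEmbedding, ?_⟩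
  rintro (a | a) (b | b) h
  · simpa [doubleStar_adj_inl_inl, doubleStar_adj_inr_inr] using h
  · simpa [doubleStar_adj_inl_inr, doubleStar_adj_inr_inl, and_comm] using h
  · simpa [doubleStar_adj_inl_inr, doubleStar_adj_inr_inl, and_comm] using h
  · simpa [doubleStar_adj_inl_inl, doubleStar_adj_inr_inr] using h

/-- The vertex type of `bigF`. -/
abbrev BigV : Type := (Fin 3 ⊕ (Fin 8 ⊕ Fin 8)) ⊕ ((Fin 8 ⊕ Fin 8) ⊕ (Fin 8 ⊕ Fin 8))

/-- The inclusion of the triangle into `bigF`. -/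
def triangleEmb : Fin 3 ↪ BigV := Function.Embedding.inl.trans Function.Embedding.inl

/-- The inclusions of the three double stars into `bigF`. -/
def doubleStarEmb : Fin 3 → (Fin 8 ⊕ Fin 8 ↪ BigV) :=
  ![Function.Embedding.inr.trans Function.Embedding.inl,
    Function.Embedding.inl.trans Function.Embedding.inr,
    Function.Embedding.inr.trans Function.Embedding.inr]

/-- The three double stars which are components of `bigF`. -/
def doubleStarComp : Fin 3 → SimpleGraph (Fin 8 ⊕ Fin 8) :=
  ![doubleStar 0 0, doubleStar 0 1, doubleStar 1 1]

lemma doubleStarComp_preconnected (j : Fin 3) : (doubleStarComp j).Preconnected := by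
  fin_cases j <;> exact doubleStar_preconnected _ _

lemma bigF_vertex_cases (x : BigV) :
    (∃ a, x = triangleEmb a) ∨ ∃ j a, x = doubleStarEmb j a := by
  rcases x with (a | a) | (a | a)
  · exact Or.inl ⟨a, rfl⟩
  · exact Or.inr ⟨0, a, rfl⟩
  · exact Or.inr ⟨1, a, rfl⟩
  · exact Or.inr ⟨2, a, rfl⟩

lemma bigF_adj_cases {x y : BigV} (h : bigF.Adj x y) :
    (∃ a b, x = triangleEmb a ∧ y = triangleEmb b ∧ a ≠ b) ∨
      ∃ j a b, x = doubleStarEmb j a ∧ y = doubleStarEmb j b ∧ (doubleStarComp j).Adj a b := by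
  rcases x with (a | a) | (a | a) <;> rcases y with (b | b) | (b | b) <;>
    simp only [bigF, disjUnionG_adj_inl_inl, disjUnionG_adj_inl_inr, disjUnionG_adj_inr_inl,
      disjUnionG_adj_inr_inr] at h
  · exact Or.inl ⟨a, b, rfl, rfl, h⟩
  · exact Or.inr ⟨0, a, b, rfl, rfl, h⟩
  · exact Or.inr ⟨1, a, b, rfl, rfl, h⟩
  · exact Or.inr ⟨2, a, b, rfl, rfl, h⟩

lemma bigF_adj_triangle {a b : Fin 3} (h : a ≠ b) :
    bigF.Adj (triangleEmb a) (triangleEmb b) := by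
  simpa [bigF, triangleEmb, Ftri] using h

lemma bigF_adj_doubleStar {j : Fin 3} {a b : Fin 8 ⊕ Fin 8} (h : (doubleStarComp j).Adj a b) :
    bigF.Adj (doubleStarEmb j a) (doubleStarEmb j b) := by
  fin_cases j <;> simpa [bigF, doubleStarEmb] using! h

lemma doubleStarEmb_ne_triangleEmb (j : Fin 3) (a : Fin 8 ⊕ Fin 8) (b : Fin 3) :
    doubleStarEmb j a ≠ triangleEmb b := by
  fin_cases j <;> simp [doubleStarEmb, triangleEmb]

lemma doubleStarEmb_inj {i j : Fin 3} {a b : Fin 8 ⊕ Fin 8}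
    (h : doubleStarEmb i a = doubleStarEmb j b) : i = j ∧ a = b := by
  fin_cases i <;> fin_cases j <;> simp_all [doubleStarEmb]

/-- A closed preconnected piece of `F` is a component: containment of either in a graph is the
same. -/
lemma contains_component_iff {α β γ : Type*} {F : SimpleGraph γ} {X : SimpleGraph β}
    (hX : X.Preconnected) (e : β ↪ γ) (he : ∀ a b, X.Adj a b → F.Adj (e a) (e b))
    (hclosed : ∀ a y, F.Adj (e a) y → ∃ b, y = e b ∧ X.Adj a b) (b₀ : β) (G : SimpleGraph α) :
    Contains G (SimpleGraph.induce (F.connectedComponentMk (e b₀)).supp F) ↔ Contains G X := by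
  constructor
  · rintro ⟨f, hf⟩
    have hmem : ∀ b, e b ∈ (F.connectedComponentMk (e b₀)).supp := fun b => by
      refine closed_of_preconnected (P := fun x => x ∈ (F.connectedComponentMk (e b₀)).supp)
        hX he (fun x y hxy hx => ?_) (a := b₀) ?_ b
      · rw [SimpleGraph.ConnectedComponent.mem_supp_iff] at hx ⊢
        rw [← hx, SimpleGraph.ConnectedComponent.eq]
        exact hxy.symm.reachable
      · exact SimpleGraph.ConnectedComponent.connectedComponentMk_mem
    refine ⟨⟨fun b => f ⟨e b, hmem b⟩, fun a b h => ?_⟩, fun a b h => hf _ _ (he a b h)⟩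
    simpa using h
  · rintro ⟨f, hf⟩
    have hmem : ∀ x : (F.connectedComponentMk (e b₀)).supp, ∃ b, x.1 = e b := by
      rintro ⟨x, hx⟩
      obtain ⟨w⟩ := (SimpleGraph.ConnectedComponent.exact hx).symm
      have key : ∀ {y z} (w : F.Walk y z), (∃ b, y = e b) → ∃ b, z = e b := by
        intro y z w
        induction w with
        | nil => exact id
        | cons h _ ih =>
          rintro ⟨b, rfl⟩
          obtain ⟨c, hc, -⟩ := hclosed _ _ h
          exact ih ⟨c, hc⟩
      exact key w ⟨b₀, rfl⟩
    choose r hr using hmem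
    refine ⟨⟨fun x => f (r x), fun x y h => ?_⟩, fun x y h => hf _ _ ?_⟩
    · have h' := f.injective h
      exact Subtype.ext (by rw [hr x, hr y, h'])
    · have h' : F.Adj x.1 y.1 := h
      rw [hr x] at h'
      obtain ⟨b, hb, hab⟩ := hclosed _ _ h'
      rw [hr y] at hb
      rwa [e.injective hb]

lemma contains_triangle_component_iff {α : Type*} (G : SimpleGraph α) :
    Contains G (SimpleGraph.induce (bigF.connectedComponentMk (triangleEmb 0)).supp bigF) ↔
      Contains G Ftri := by
  refine contains_component_iff (SimpleGraph.preconnected_top) triangleEmb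
    (fun a b h => bigF_adj_triangle h.ne) (fun a y h => ?_) 0 G
  obtain ⟨a', b, ha, hb, hab⟩ | ⟨j, a', b, ha, -⟩ := bigF_adj_cases h
  · exact ⟨b, hb, by rw [triangleEmb.injective ha]; exact hab⟩
  · exact absurd ha.symm (doubleStarEmb_ne_triangleEmb _ _ _)

lemma contains_doubleStar_component_iff {α : Type*} (G : SimpleGraph α) (j : Fin 3) :
    Contains G (SimpleGraph.induce
      (bigF.connectedComponentMk (doubleStarEmb j (Sum.inl 0))).supp bigF) ↔
      Contains G (doubleStarComp j) := by
  refine contains_component_iff (doubleStarComp_preconnected j) (doubleStarEmb j)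
    (fun a b h => bigF_adj_doubleStar h) (fun a y h => ?_) _ G
  obtain ⟨a', b, ha, -⟩ | ⟨j', a', b, ha, hb, hab⟩ := bigF_adj_cases h
  · exact absurd ha (doubleStarEmb_ne_triangleEmb _ _ _)
  · obtain ⟨rfl, rfl⟩ := doubleStarEmb_inj ha
    exact ⟨b, hb, hab⟩

lemma not_contains_starT_triangle : ¬ Contains starT Ftri := by
  rintro ⟨f, hf⟩
  have h01 := hf 0 1 (by simp [Ftri])
  have h02 := hf 0 2 (by simp [Ftri])
  have h12 := hf 1 2 (by simp [Ftri])
  rw [starT_adj] at h01 h02 h12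
  grind

/-- No injection from the vertices of a double star into a set of fewer than sixteen elements. -/
lemma not_injective_of_card_lt {α : Type*} {f : Fin 8 ⊕ Fin 8 → α} (hf : Function.Injective f)
    (s : Finset α) (hs : s.card < 16) : ¬ ∀ a, f a ∈ s := by
  intro h
  have := Finset.card_le_card_of_injOn (s := Finset.univ) (t := s) f (fun a _ => h a) hf.injOn
  simp at this
  omega

lemma not_contains_starT_doubleStar (X : SimpleGraph (Fin 8 ⊕ Fin 8)) : ¬ Contains starT X := by
  rintro ⟨f, -⟩
  exact not_injective_of_card_lt f.injective Finset.univ (by simp) (by simp)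

lemma starT_add_edge_contains_component (u v : Fin 8) (huv : u ≠ v) (h : ¬ starT.Adj u v) :
    ∃ c : bigF.ConnectedComponent, ¬ Contains starT (SimpleGraph.induce c.supp bigF) ∧
      Contains (starT ⊔ SimpleGraph.fromEdgeSet {s(u, v)}) (SimpleGraph.induce c.supp bigF) := by
  refine ⟨_, (contains_triangle_component_iff _).not.mpr not_contains_starT_triangle,
    (contains_triangle_component_iff _).mpr ?_⟩
  rw [starT_adj] at h
  push Not at h
  obtain ⟨hu, hv⟩ := h huv
  refine ⟨⟨![0, u, v], ?_⟩, ?_⟩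
  · intro a b hab
    fin_cases a <;> fin_cases b <;> simp_all [eq_comm]
  · intro a b hab
    have hne : a ≠ b := hab.ne
    change (starT ⊔ SimpleGraph.fromEdgeSet {s(u, v)}).Adj (![0, u, v] a) (![0, u, v] b)
    fin_cases a <;> fin_cases b <;> simp_all [starT_adj, eq_comm]

lemma two_starT_add_edge_contains_component (u v : Fin 8) :
    ∃ c : bigF.ConnectedComponent, ¬ Contains starT (SimpleGraph.induce c.supp bigF) ∧
      Contains (doubleStar u v) (SimpleGraph.induce c.supp bigF) := by
  suffices ∃ j, Contains (doubleStar u v) (doubleStarComp j) by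
    obtain ⟨j, hj⟩ := this
    exact ⟨_, (contains_doubleStar_component_iff _ j).not.mpr (not_contains_starT_doubleStar _),
      (contains_doubleStar_component_iff _ j).mpr hj⟩
  by_cases hu : u = 0 <;> by_cases hv : v = 0
  · subst hu hv
    exact ⟨0, Function.Embedding.refl _, fun _ _ h => h⟩
  · subst hu
    have := contains_doubleStar_of_equiv (Equiv.refl _) (Equiv.swap 1 v) (fun _ _ h => h)
      (fun _ _ => starT_adj_swap hv) 0 1
    exact ⟨1, by simpa using! this⟩
  · subst hv
    have := contains_doubleStar_of_equiv (Equiv.refl _) (Equiv.swap 1 u) (fun _ _ h => h)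
      (fun _ _ => starT_adj_swap hu) 0 1
    obtain ⟨f, hf⟩ : Contains (doubleStar 0 u) (doubleStar 0 1) := by simpa using this
    obtain ⟨g, hg⟩ := contains_doubleStar_swap 0 u
    exact ⟨1, f.trans g, fun a b h => hg _ _ (hf _ _ h)⟩
  · have := contains_doubleStar_of_equiv (Equiv.swap 1 u) (Equiv.swap 1 v)
      (fun _ _ => starT_adj_swap hu) (fun _ _ => starT_adj_swap hv) 1 1
    exact ⟨2, by simpa using! this⟩

/-- A triangle together with disjoint copies of the three double stars gives a copy of `bigF`. -/
lemma contains_bigF_of_pieces {α : Type*} {G : SimpleGraph α} {t : Fin 3 → α}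
    {g : Fin 3 → Fin 8 ⊕ Fin 8 → α} (ht : ∀ a b, a ≠ b → G.Adj (t a) (t b))
    (hg : ∀ j a b, (doubleStarComp j).Adj a b → G.Adj (g j a) (g j b))
    (hinj : ∀ i j a b, g i a = g j b → i = j ∧ a = b) (hd : ∀ j a b, g j a ≠ t b) :
    Contains G bigF := by
  have htinj : ∀ a b, t a = t b → a = b := fun a b h => by
    by_contra hab
    exact (ht a b hab).ne h
  let f : BigV → α := Sum.elim (Sum.elim t (g 0)) (Sum.elim (g 1) (g 2))
  have hft : ∀ a, f (triangleEmb a) = t a := fun _ => rfl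
  have hfg : ∀ j a, f (doubleStarEmb j a) = g j a := fun j a => by fin_cases j <;> rfl
  refine ⟨⟨f, fun x y h => ?_⟩, fun x y h => ?_⟩
  · obtain ⟨a, rfl⟩ | ⟨i, a, rfl⟩ := bigF_vertex_cases x <;>
    obtain ⟨b, rfl⟩ | ⟨j, b, rfl⟩ := bigF_vertex_cases y <;> simp only [hft, hfg] at h
    · rw [htinj a b h]
    · exact absurd h.symm (hd _ _ _)
    · exact absurd h (hd _ _ _)
    · obtain ⟨rfl, rfl⟩ := hinj _ _ _ _ h
      rfl
  · obtain ⟨a, b, rfl, rfl, hab⟩ | ⟨j, a, b, rfl, rfl, hab⟩ := bigF_adj_cases h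
    · exact ht a b hab
    · change G.Adj (f _) (f _)
      simpa only [hfg] using hg j a b hab

/-- If joining two leaves of a star in `H ∪ kT` creates `bigF`, then `H` contains disjoint copies
of the three double stars. -/
lemma exists_doubleStars_of_leaf_edge {V : Type*} {H : SimpleGraph V} {k : ℕ} {i₀ : Fin k}
    (hc : Contains (unionCopies H k starT ⊔
      SimpleGraph.fromEdgeSet {s(Sum.inr (i₀, 1), Sum.inr (i₀, 2))}) bigF) :
    ∃ g : Fin 3 → Fin 8 ⊕ Fin 8 → V,
      (∀ j a b, (doubleStarComp j).Adj a b → H.Adj (g j a) (g j b)) ∧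
        ∀ i j a b, g i a = g j b → i = j ∧ a = b := by
  obtain ⟨f, hf⟩ := hc
  have hin : ∀ j a, ∃ v, f (doubleStarEmb j a) = Sum.inl v := by
    intro j a
    rcases hfa : f (doubleStarEmb j a) with v | ⟨i, b⟩
    · exact ⟨v, rfl⟩
    · exfalso
      have hall := closed_of_preconnected (doubleStarComp_preconnected j)
        (f := fun a => f (doubleStarEmb j a)) (fun a b h => hf _ _ (bigF_adj_doubleStar h))
        (P := fun x => ∃ c, x = Sum.inr (i, c)) (by
          rintro x (y | ⟨i', c⟩) hxy ⟨d, rfl⟩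
          · simp at hxy
          · have : i = i' := by
              simp at hxy
              grind
            exact ⟨c, by rw [this]⟩) (a := a) ⟨b, hfa⟩
      choose r hr using hall
      refine not_injective_of_card_lt (f := r) (fun a b h => ?_) Finset.univ (by simp) (by simp)
      exact (doubleStarEmb j).injective (f.injective ((hr a).trans (by rw [h, ← hr b])))
  choose g hg using hin
  refine ⟨g, fun j a b h => ?_, fun i j a b h => ?_⟩
  · have := hf _ _ (bigF_adj_doubleStar h)
    rw [hg, hg] at this
    simpa using this
  · exact doubleStarEmb_inj (f.injective (by rw [hg, hg, h]))

/-- Joining a vertex of a small clique of `H` to the centre of a star does not create `bigF`. -/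
lemma contains_of_small_clique_edge {V : Type*} {H : SimpleGraph V} {k : ℕ} {i₀ : Fin k} {v : V}
    (C : Finset V) (hv : v ∈ C) (hclosed : ∀ x y, H.Adj x y → x ∈ C → y ∈ C) (hC : C.card ≤ 2)
    (hc : Contains (unionCopies H k starT ⊔
      SimpleGraph.fromEdgeSet {s(Sum.inl v, Sum.inr (i₀, 0))}) bigF) :
    Contains (unionCopies H k starT) bigF := by
  classical
  obtain ⟨f, hf⟩ := hc
  have hnot : ∀ x y, bigF.Adj x y → ¬ (f x = Sum.inl v ∧ f y = Sum.inr (i₀, 0)) := by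
    rintro x y hxy ⟨hx, hy⟩
    obtain ⟨a, b, rfl, rfl, hab⟩ | ⟨j, a, b, rfl, rfl, hab⟩ := bigF_adj_cases hxy
    · obtain ⟨c, hca, hcb⟩ : ∃ c : Fin 3, c ≠ a ∧ c ≠ b := by
        clear hx hy hxy
        revert a b
        decide
      have h1 := hf _ _ (bigF_adj_triangle hca)
      have h2 := hf _ _ (bigF_adj_triangle hcb)
      rw [hx] at h1
      rw [hy] at h2
      rcases hfc : f (triangleEmb c) with w | ⟨i, w⟩
      · have : w = v := by simpa [hfc] using h2
        exact hca (triangleEmb.injective (f.injective (by rw [hfc, hx, this])))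
      · have : i = i₀ ∧ w = 0 := by simpa [hfc] using h1
        exact hcb (triangleEmb.injective (f.injective (by rw [hfc, hy, this.1, this.2])))
    · let s : Finset (V ⊕ Fin k × Fin 8) := C.disjSum (Finset.univ.image fun w => (i₀, w))
      have hs : s.card < 16 := by
        have : (Finset.univ.image fun w : Fin 8 => (i₀, w)).card ≤ 8 :=
          Finset.card_image_le.trans (by simp)
        rw [Finset.card_disjSum]
        omega
      refine not_injective_of_card_lt (f := fun a => f (doubleStarEmb j a))
        (f.injective.comp (doubleStarEmb j).injective) s hs ?_
      refine closed_of_preconnected (doubleStarComp_preconnected j)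
        (f := fun a => f (doubleStarEmb j a)) (fun a b h => hf _ _ (bigF_adj_doubleStar h))
        (P := fun x => x ∈ s) ?_ (a := a) (by simp [s, hx, hv])
      rintro (x | ⟨i, x⟩) (y | ⟨i', y⟩) hxy hxs
      · simp only [s, Finset.inl_mem_disjSum] at hxs ⊢
        exact hclosed x y (by simpa using hxy) hxs
      · have : i' = i₀ ∧ y = 0 := by
          simp at hxy
          grind
        simp [s, this]
      · have : y = v := by
          simp at hxy
          grind
        simpa [s, this] using hv
      · have h1 : i = i' := by
          simp at hxy
          grind
        have h2 : i₀ = i := by simpa [s] using hxs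
        simp [s, h2, h1]
  refine ⟨f, fun x y hxy => ?_⟩
  obtain h | h := SimpleGraph.sup_adj .. |>.mp (hf x y hxy)
  · exact h
  · exfalso
    simp only [SimpleGraph.fromEdgeSet_adj, Set.mem_singleton_iff, Sym2.eq_iff] at h
    obtain ⟨⟨h1, h2⟩ | ⟨h1, h2⟩, -⟩ := h
    · exact hnot x y hxy ⟨h1, h2⟩
    · exact hnot y x hxy.symm ⟨h2, h1⟩

/-- A saturated blueprint made of cliques has between `48` and `54` vertices in `H`. -/
lemma card_bounds_of_saturated {V : Type*} [Fintype V] {H : SimpleGraph V}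
    (hH : ∀ u v, H.Reachable u v → u ≠ v → H.Adj u v) {k : ℕ} (i₀ : Fin k)
    (hsat : SatSingle bigF (unionCopies H k starT)) :
    48 ≤ Fintype.card V ∧ Fintype.card V ≤ 54 := by
  classical
  obtain ⟨hfree, hadd⟩ := hsat
  obtain ⟨g, hg, hinj⟩ := exists_doubleStars_of_leaf_edge
    (hadd (Sum.inr (i₀, 1)) (Sum.inr (i₀, 2)) (by simp) (by simp [starT_adj]))
  let S : Finset V := Finset.univ.image fun p : Fin 3 × (Fin 8 ⊕ Fin 8) => g p.1 p.2
  have hS : S.card = 48 := by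
    rw [Finset.card_image_of_injective]
    · simp
    · rintro ⟨i, a⟩ ⟨j, b⟩ h
      obtain ⟨rfl, rfl⟩ := hinj _ _ _ _ h
      rfl
  have hmem : ∀ j a, g j a ∈ S := fun j a => Finset.mem_image.mpr ⟨(j, a), by simp, rfl⟩
  have htri : ∀ B : Finset V, Disjoint B S → (∀ x ∈ B, ∀ y ∈ B, H.Reachable x y) →
      B.card ≤ 2 := by
    intro B hB hreach
    by_contra hcard
    obtain ⟨x, y, z, hx, hy, hz, hxy, hxz, hyz⟩ := Finset.two_lt_card_iff.mp (not_le.mp hcard)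
    have hxB : ∀ a, ![x, y, z] a ∈ B := by
      intro a
      fin_cases a <;> assumption
    have hne : ∀ a b, a ≠ b → ![x, y, z] a ≠ ![x, y, z] b := by
      intro a b hab
      fin_cases a <;> fin_cases b <;>
        first | exact absurd rfl hab | assumption | (apply Ne.symm; assumption)
    refine hfree (contains_bigF_of_pieces (t := fun a => Sum.inl (![x, y, z] a))
      (g := fun j a => Sum.inl (g j a)) (fun a b hab => ?_) (fun j a b h => ?_)
      (fun i j a b h => hinj i j a b (Sum.inl_injective h)) (fun j a b h => ?_))
    · rw [unionCopies_adj_inl_inl]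
      exact hH _ _ (hreach _ (hxB a) _ (hxB b)) (hne a b hab)
    · rw [unionCopies_adj_inl_inl]
      exact hg j a b h
    · exact Finset.disjoint_left.mp hB (hxB b) (Sum.inl_injective h ▸ hmem j a)
  have hmeet : ∀ v, ∃ j, H.Reachable v (g j (Sum.inl 0)) := by
    intro v
    by_contra hv
    push Not at hv
    let C : Finset V := Finset.univ.filter fun w => H.Reachable v w
    refine hfree (contains_of_small_clique_edge (i₀ := i₀) (v := v) C (by simp [C])
      (fun x y hxy hx => ?_) (htri C ?_ ?_) (hadd _ _ (by simp) (by simp)))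
    · simp only [C, Finset.mem_filter, Finset.mem_univ, true_and] at hx ⊢
      exact hx.trans hxy.reachable
    · rw [Finset.disjoint_left]
      intro w hw hwS
      obtain ⟨⟨j, a⟩, -, rfl⟩ := Finset.mem_image.mp hwS
      exact hv j (closed_of_preconnected (doubleStarComp_preconnected j) (hg j)
        (P := fun x => H.Reachable v x) (fun x y hxy hx => hx.trans hxy.reachable)
        (Finset.mem_filter.mp hw).2 _)
    · intro x hx y hy
      exact (Finset.mem_filter.mp hx).2.symm.trans (Finset.mem_filter.mp hy).2
  choose r hr using hmeet
  have hcompl : Sᶜ.card ≤ 2 * (Finset.univ : Finset (Fin 3)).card := by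
    refine Finset.card_le_mul_card_image_of_maps_to (f := r) (fun _ _ => Finset.mem_univ _) 2
      fun j _ => htri _ ?_ ?_
    · exact Finset.disjoint_left.mpr fun x hx =>
        Finset.mem_compl.mp (Finset.mem_filter.mp hx).1
    · intro x hx y hy
      have hx' := hr x
      have hy' := hr y
      rw [(Finset.mem_filter.mp hx).2] at hx'
      rw [(Finset.mem_filter.mp hy).2] at hy'
      exact hx'.trans hy'.symm
  have htotal := Finset.card_add_card_compl S
  simp only [Finset.card_univ, Fintype.card_fin] at hcompl htotal
  omega

/-- `F` and `T` as above satisfy the hypotheses of the key lemma, yet no `F`-saturated blueprint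
`(H,T)` in which `H` is a disjoint union of complete graphs has `|V(H)| ≡ 7 (mod 8)`. -/
theorem stmt14 :
    -- (i) every T+e contains a component of F not contained in T
    (∀ u v : Fin 8, u ≠ v → ¬ starT.Adj u v →
      ∃ c : bigF.ConnectedComponent, ¬ Contains starT (SimpleGraph.induce c.supp bigF) ∧
        Contains (starT ⊔ SimpleGraph.fromEdgeSet {s(u, v)})
          (SimpleGraph.induce c.supp bigF)) ∧
    -- (i) every 2T+e contains a component of F not contained in T
    (∀ u v : Fin 8,
      ∃ c : bigF.ConnectedComponent, ¬ Contains starT (SimpleGraph.induce c.supp bigF) ∧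
        Contains (disjUnionG starT starT ⊔
            SimpleGraph.fromEdgeSet {s((Sum.inl u : Fin 8 ⊕ Fin 8), (Sum.inr v : Fin 8 ⊕ Fin 8))})
          (SimpleGraph.induce c.supp bigF)) ∧
    -- (ii)
    (∀ (nH : ℕ) (H : SimpleGraph (Fin nH)),
      (∀ u v : Fin nH, H.Reachable u v → u ≠ v → H.Adj u v) →
      (∃ K : ℕ, ∀ k : ℕ, K ≤ k → SatSingle bigF (unionCopies H k starT)) →
      nH % 8 ≠ 7) := by
  refine ⟨starT_add_edge_contains_component, two_starT_add_edge_contains_component, ?_⟩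
  rintro nH H hH ⟨K, hK⟩
  have h := card_bounds_of_saturated hH (0 : Fin (K + 1)) (hK (K + 1) (Nat.le_succ K))
  rw [Fintype.card_fin] at h
  omega
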